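/- Let C be an s-extremal singly even self-dual [60,30,12] code (so its shadow has minimum weight 10), and suppose that the coset C₁ contains no vector of weight 10. Then the neighbor N₃(C) = C₀ ∪ C₃ is an s-extremal singly even self-dual [60,30,10] code; that is, N₃(C) is singly even self-dual with minimum weight 10 and its shadow C₂ ∪ C₁ has minimum weight 14. -/

import Mathlib

open Finset

/-- Hamming weight of a binary vector. -/
def wt {n : ℕ} (x : Fin n → ZMod 2) : ℕ := hammingNorm x

/-- The dual of a set of binary vectors with respect to the standard inner product. -/
def dualSet {n : ℕ} (C : Set (Fin n → ZMod 2)) : Set (Fin n → ZMod 2) :=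
  {x | ∀ y ∈ C, ∑ i, x i * y i = 0}

/-- A binary linear code is self-dual if it equals its dual code. -/
def IsSelfDual {n : ℕ} (C : Submodule (ZMod 2) (Fin n → ZMod 2)) : Prop :=
  (C : Set (Fin n → ZMod 2)) = dualSet (C : Set (Fin n → ZMod 2))

/-- A self-dual code is singly even if some codeword has weight not divisible by 4. -/
def IsSinglyEvenSelfDual {n : ℕ} (C : Submodule (ZMod 2) (Fin n → ZMod 2)) : Prop :=
  IsSelfDual C ∧ ∃ x ∈ C, ¬ (4 ∣ wt x)

/-- The doubly even subcode `C₀` of `C` (as a set): codewords of weight ≡ 0 (mod 4). -/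
def evenSub {n : ℕ} (C : Submodule (ZMod 2) (Fin n → ZMod 2)) : Set (Fin n → ZMod 2) :=
  {x | x ∈ C ∧ 4 ∣ wt x}

/-- The shadow `S = C₀^⊥ \ C` of a singly even self-dual code. -/
def shadow {n : ℕ} (C : Submodule (ZMod 2) (Fin n → ZMod 2)) : Set (Fin n → ZMod 2) :=
  dualSet (evenSub C) \ (C : Set (Fin n → ZMod 2))

/-- The minimum (nonzero) weight of a set of vectors. -/
noncomputable def minWtSet {n : ℕ} (S : Set (Fin n → ZMod 2)) : ℕ :=
  sInf {w | ∃ x ∈ S, x ≠ 0 ∧ wt x = w}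

/-- The minimum weight of a code. -/
noncomputable def minWt {n : ℕ} (C : Submodule (ZMod 2) (Fin n → ZMod 2)) : ℕ :=
  minWtSet (C : Set (Fin n → ZMod 2))

/-- A singly even self-dual code of length `n` is s-extremal if
`d(S) = n/2 + 4 - 2 d(C)`. -/
def IsSExtremal {n : ℕ} (C : Submodule (ZMod 2) (Fin n → ZMod 2)) : Prop :=
  IsSinglyEvenSelfDual C ∧
    (minWtSet (shadow C) : ℤ) = ((n / 2 : ℕ) : ℤ) + 4 - 2 * (minWt C : ℤ)

/-- Two codes are equivalent if one is obtained from the other by permuting coordinates. -/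
def CodeEquiv {n : ℕ} (C D : Submodule (ZMod 2) (Fin n → ZMod 2)) : Prop :=
  ∃ σ : Equiv.Perm (Fin n),
    Submodule.map (LinearMap.funLeft (ZMod 2) (ZMod 2) σ) C = D

/-- The neighbor `C₀ ∪ (t + C₀)` of `C` obtained from a shadow vector `t`:
the span of the doubly even subcode together with `t`. -/
def neighborCode {n : ℕ} (C : Submodule (ZMod 2) (Fin n → ZMod 2))
    (t : Fin n → ZMod 2) : Submodule (ZMod 2) (Fin n → ZMod 2) :=
  Submodule.span (ZMod 2) (evenSub C ∪ {t})

/-!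
Write `N` for the neighbor `C₀ ∪ C₃`. Its shadow is `C₂ ∪ C₁`: weights in `C₂` are at least 12
and `≡ 2 (mod 4)`, weights in `C₁` are at least 10, `≡ 2 (mod 4)` and not 10, so all of them
are at least 14. If 14 did not occur, then, the shadow being closed under complement, its weights
`w` would lie in `{18, 22, …, 42}`, and the polynomial `X²(X² - 8²)(X² - 16²)(X² - 24²)` of
degree 8 would vanish at every `60 - 2w`. But the shadow is a union of cosets of the self-dual code
`N`, of minimum weight `10 > 8`, so it is an orthogonal array of strength 8: a polynomial of degree
at most 8 in the weight has the same average over the shadow as over the whole space, and there the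
average is not zero.
-/

/-! ### Weights and inner products -/

section Weight

variable {n : ℕ} {x y : Fin n → ZMod 2}

theorem wt_zero : wt (0 : Fin n → ZMod 2) = 0 :=
  hammingNorm_zero

theorem wt_eq_sum_val (x : Fin n → ZMod 2) : wt x = ∑ i, (x i).val := by
  have val_eq : ∀ a : ZMod 2, a.val = if a ≠ 0 then 1 else 0 := by decide
  simp only [wt, hammingNorm, val_eq, card_filter]

theorem wt_add_add_two_mul (x y : Fin n → ZMod 2) :
    wt (x + y) + 2 * ∑ i, (x i * y i).val = wt x + wt y := by
  have val_add : ∀ a b : ZMod 2, (a + b).val + 2 * (a * b).val = a.val + b.val := by decide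
  simp only [wt_eq_sum_val, mul_sum, ← sum_add_distrib, Pi.add_apply, val_add]

theorem wt_add_le (x y : Fin n → ZMod 2) : wt (x + y) ≤ wt x + wt y := by
  have := wt_add_add_two_mul x y
  lia

theorem wt_add_one_add_wt (x : Fin n → ZMod 2) : wt (x + 1) + wt x = n := by
  have val_add_one : ∀ a : ZMod 2, (a + 1).val + a.val = 1 := by decide
  simp [wt_eq_sum_val, ← sum_add_distrib, val_add_one]

theorem wt_single_one (i : Fin n) : wt (Pi.single i 1 : Fin n → ZMod 2) = 1 := by
  simp [wt_eq_sum_val, Pi.single_apply, apply_ite ZMod.val, ZMod.val_one]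

theorem wt_sum_single_one_le {k : ℕ} (p : Fin k → Fin n) :
    wt (∑ j, Pi.single (p j) 1 : Fin n → ZMod 2) ≤ k :=
  (le_sum_of_subadditive wt wt_zero.le wt_add_le univ _).trans_eq (by simp [wt_single_one])

theorem wt_add_modEq (x y : Fin n → ZMod 2) :
    wt (x + y) ≡ wt x + wt y + 2 * (x ⬝ᵥ y).val [MOD 4] := by
  have dot_val : (x ⬝ᵥ y).val = (∑ i, (x i * y i).val) % 2 := by
    rw [← ZMod.val_natCast]
    simp [dotProduct]
  have := wt_add_add_two_mul x y
  rw [Nat.ModEq]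
  lia

theorem dotProduct_self_eq_wt (x : Fin n → ZMod 2) : x ⬝ᵥ x = wt x := by
  have mul_self : ∀ a : ZMod 2, a * a = a := by decide
  simp [dotProduct, mul_self, wt_eq_sum_val]

theorem one_dotProduct_eq_wt (x : Fin n → ZMod 2) : 1 ⬝ᵥ x = (wt x : ZMod 2) := by
  simp [one_dotProduct, wt_eq_sum_val]

theorem even_wt_iff : Even (wt x) ↔ x ⬝ᵥ x = 0 := by
  rw [dotProduct_self_eq_wt, ZMod.natCast_eq_zero_iff_even]

theorem even_of_modEq_two {w : ℕ} (hw : w ≡ 2 [MOD 4]) : Even w :=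
  even_iff_two_dvd.2 ((hw.dvd_iff (by norm_num)).2 dvd_rfl)

theorem not_four_dvd_of_modEq_two {w : ℕ} (hw : w ≡ 2 [MOD 4]) : ¬ 4 ∣ w :=
  fun h => absurd ((hw.dvd_iff dvd_rfl).1 h) (by norm_num)

theorem mem_dualSet {S : Set (Fin n → ZMod 2)} : x ∈ dualSet S ↔ ∀ y ∈ S, x ⬝ᵥ y = 0 :=
  Iff.rfl

theorem minWtSet_eq_iff {S : Set (Fin n → ZMod 2)} {k : ℕ} (hk : k ≠ 0) :
    minWtSet S = k ↔ (∃ x ∈ S, wt x = k) ∧ ∀ x ∈ S, x ≠ 0 → k ≤ wt x := by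
  constructor
  · rintro rfl
    obtain ⟨x, hxS, -, hx⟩ := Nat.sInf_mem (Nat.nonempty_of_sInf_eq_succ (Nat.succ_pred hk).symm)
    exact ⟨⟨x, hxS, hx⟩, fun y hyS hy => Nat.sInf_le ⟨y, hyS, hy, rfl⟩⟩
  · rintro ⟨⟨x, hxS, rfl⟩, hmin⟩
    refine IsLeast.csInf_eq ⟨⟨x, hxS, hammingNorm_ne_zero_iff.1 hk, rfl⟩, ?_⟩
    rintro _ ⟨y, hyS, hy, rfl⟩
    exact hmin y hyS hy

end Weight

/-! ### Self-dual codes, shadows and neighbors -/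

section Code

variable {n : ℕ} {C : Submodule (ZMod 2) (Fin n → ZMod 2)} {s t x y z : Fin n → ZMod 2}

/-- A code is self-orthogonal if it is contained in its dual. -/
def IsSelfOrthogonal (C : Submodule (ZMod 2) (Fin n → ZMod 2)) : Prop :=
  ∀ x ∈ C, ∀ y ∈ C, x ⬝ᵥ y = 0

theorem IsSelfDual.mem_iff (hC : IsSelfDual C) : x ∈ C ↔ ∀ y ∈ C, x ⬝ᵥ y = 0 :=
  Set.ext_iff.1 hC x

theorem IsSelfDual.isSelfOrthogonal (hC : IsSelfDual C) : IsSelfOrthogonal C :=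
  fun _ hx => hC.mem_iff.1 hx

namespace IsSelfOrthogonal

theorem even_wt (hC : IsSelfOrthogonal C) (hx : x ∈ C) : Even (wt x) :=
  even_wt_iff.2 (hC x hx x hx)

theorem wt_modEq_two (hC : IsSelfOrthogonal C) (hx : x ∈ C) (hx₀ : x ∉ evenSub C) :
    wt x ≡ 2 [MOD 4] := by
  have not_dvd : ¬ 4 ∣ wt x := fun h => hx₀ ⟨hx, h⟩
  have := hC.even_wt hx
  rw [Nat.ModEq]
  grind

theorem add_mem_evenSub_iff (hC : IsSelfOrthogonal C) (hx : x ∈ C) (hy : y ∈ C) :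
    x + y ∈ evenSub C ↔ (x ∈ evenSub C ↔ y ∈ evenSub C) := by
  have hadd := wt_add_modEq x y
  have hx2 := hC.even_wt hx
  have hy2 := hC.even_wt hy
  rw [hC x hx y hy, ZMod.val_zero, Nat.ModEq] at hadd
  simp only [evenSub, Set.mem_ofPred_eq, C.add_mem hx hy, hx, hy, true_and]
  grind

end IsSelfOrthogonal

theorem zero_mem_evenSub : 0 ∈ evenSub C :=
  ⟨C.zero_mem, by simp [wt_zero]⟩

/-- The doubly even subcode `C₀ = evenSub C` of a self-orthogonal code, as a subspace. -/
def evenSubmodule (hC : IsSelfOrthogonal C) : Submodule (ZMod 2) (Fin n → ZMod 2) :=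
  AddSubgroup.toZModSubmodule 2
    { carrier := evenSub C
      zero_mem' := zero_mem_evenSub
      add_mem' := fun hx hy => (hC.add_mem_evenSub_iff hx.1 hy.1).2 (iff_of_true hx hy)
      neg_mem' := fun {x} hx => by rwa [ZModModule.neg_eq_self x] }

theorem span_evenSub (hC : IsSelfOrthogonal C) :
    Submodule.span (ZMod 2) (evenSub C) = evenSubmodule hC :=
  Submodule.span_eq (evenSubmodule hC)

theorem mem_neighborCode_iff (hC : IsSelfOrthogonal C) :
    x ∈ neighborCode C t ↔ x ∈ evenSub C ∨ x + t ∈ evenSub C := by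
  have exists_zmod_two : ∀ p : ZMod 2 → Prop, (∃ a, p a) ↔ p 0 ∨ p 1 := fun _ =>
    Fin.exists_fin_two
  rw [neighborCode, Set.union_singleton, Submodule.mem_span_insert', span_evenSub hC,
    exists_zmod_two, zero_smul, add_zero, one_smul]
  rfl

theorem evenSub_subset_neighborCode : evenSub C ⊆ neighborCode C t :=
  Set.subset_union_left.trans Submodule.subset_span

theorem self_mem_neighborCode : t ∈ neighborCode C t :=
  Submodule.subset_span (Set.mem_union_right _ rfl)

theorem mem_dualSet_neighborCode_iff (hC : IsSelfOrthogonal C) :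
    x ∈ dualSet (neighborCode C t) ↔ x ∈ dualSet (evenSub C) ∧ x ⬝ᵥ t = 0 := by
  simp only [mem_dualSet]
  refine ⟨fun h => ⟨fun y hy => h y (evenSub_subset_neighborCode hy), h t self_mem_neighborCode⟩,
    fun ⟨hx, hxt⟩ y hy => ?_⟩
  rcases (mem_neighborCode_iff hC).1 hy with hy₀ | hyt
  · exact hx y hy₀
  · simpa [dotProduct_add, hxt] using hx _ hyt

theorem neighborCode_eq_self (hC : IsSelfOrthogonal C) (hz : z ∈ C) (hz₀ : z ∉ evenSub C) :
    neighborCode C z = C := by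
  ext x
  rw [mem_neighborCode_iff hC]
  refine ⟨fun hx => hx.elim (·.1) fun hxz => (C.add_mem_iff_left hz).1 hxz.1, fun hx => ?_⟩
  have := hC.add_mem_evenSub_iff hx hz
  tauto

theorem finrank_neighborCode (hC : IsSelfOrthogonal C) (ht : t ∉ evenSub C) :
    Module.finrank (ZMod 2) (neighborCode C t) =
      Module.finrank (ZMod 2) (evenSubmodule hC) + 1 := by
  rw [neighborCode, Submodule.span_union, span_evenSub hC]
  exact Submodule.finrank_sup_span_singleton (p := evenSubmodule hC) ht

theorem finrank_neighborCode_eq_finrank (hC : IsSelfOrthogonal C) (hz : z ∈ C)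
    (hz₀ : z ∉ evenSub C) (ht : t ∉ evenSub C) :
    Module.finrank (ZMod 2) (neighborCode C t) = Module.finrank (ZMod 2) C := by
  rw [finrank_neighborCode hC ht, ← finrank_neighborCode hC hz₀, neighborCode_eq_self hC hz hz₀]

theorem mem_shadow_iff : t ∈ shadow C ↔ t ∈ dualSet (evenSub C) ∧ t ∉ C :=
  Iff.rfl

theorem ne_zero_of_mem_shadow (ht : t ∈ shadow C) : t ≠ 0 :=
  fun h => ht.2 (h ▸ C.zero_mem)

theorem notMem_evenSub_of_mem_shadow (ht : t ∈ shadow C) : t ∉ evenSub C :=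
  fun h => ht.2 h.1

theorem mem_dualSet_evenSub_of_mem (hC : IsSelfOrthogonal C) (hx : x ∈ C) :
    x ∈ dualSet (evenSub C) :=
  fun y hy => hC x hx y hy.1

theorem add_mem_shadow (hC : IsSelfOrthogonal C) (ht : t ∈ shadow C) (hx : x ∈ C) :
    t + x ∈ shadow C := by
  refine ⟨mem_dualSet.2 fun y hy => ?_, fun h => ht.2 ((C.add_mem_iff_left hx).1 h)⟩
  rw [add_dotProduct, mem_dualSet.1 ht.1 y hy, hC x hx y hy.1, add_zero]

theorem mem_shadow_of_add_mem (hC : IsSelfOrthogonal C) (ht : t ∈ shadow C) (hx : x + t ∈ C) :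
    x ∈ shadow C := by
  simpa only [add_comm x t, ← add_assoc, ZModModule.add_self, zero_add]
    using add_mem_shadow hC ht hx

theorem le_wt_of_mem_neighborCode {k : ℕ} (hC : IsSelfOrthogonal C) (ht : t ∈ shadow C)
    (hCmin : ∀ y ∈ C, y ≠ 0 → k ≤ wt y) (hSmin : ∀ y ∈ shadow C, k ≤ wt y)
    (hx : x ∈ neighborCode C t) (hx₀ : x ≠ 0) : k ≤ wt x :=
  ((mem_neighborCode_iff hC).1 hx).elim (fun h => hCmin x h.1 hx₀)
    fun h => hSmin x (mem_shadow_of_add_mem hC ht h.1)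

namespace IsSelfDual

theorem one_mem (hC : IsSelfDual C) : 1 ∈ C :=
  hC.mem_iff.2 fun x hx => by
    rw [one_dotProduct_eq_wt, ← dotProduct_self_eq_wt, hC.isSelfOrthogonal x hx x hx]

theorem dotProduct_eq_zero_iff (hC : IsSelfDual C) (ht : t ∈ shadow C) (hx : x ∈ C) :
    t ⬝ᵥ x = 0 ↔ x ∈ evenSub C := by
  refine ⟨fun htx => by_contra fun hx₀ => ht.2 (hC.mem_iff.2 fun y hy => ?_),
    mem_dualSet.1 ht.1 x⟩
  by_cases hy₀ : y ∈ evenSub C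
  · exact mem_dualSet.1 ht.1 y hy₀
  · have hyx : y + x ∈ evenSub C :=
      (hC.isSelfOrthogonal.add_mem_evenSub_iff hy hx).2 (iff_of_false hy₀ hx₀)
    simpa [dotProduct_add, htx] using mem_dualSet.1 ht.1 _ hyx

theorem add_mem_of_mem_shadow (hC : IsSelfDual C) (hs : s ∈ shadow C) (ht : t ∈ shadow C) :
    s + t ∈ C := by
  refine hC.mem_iff.2 fun x hx => ?_
  have hsx := hC.dotProduct_eq_zero_iff hs hx
  have htx := hC.dotProduct_eq_zero_iff ht hx
  have add_eq_zero : ∀ a b : ZMod 2, (a = 0 ↔ b = 0) → a + b = 0 := by decide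
  rw [add_dotProduct]
  exact add_eq_zero _ _ (hsx.trans htx.symm)

theorem wt_modEq_of_mem_shadow (hC : IsSelfDual C) (hs : s ∈ shadow C) (ht : t ∈ shadow C) :
    wt t ≡ wt s [MOD 4] := by
  have hx := hC.add_mem_of_mem_shadow hs ht
  have hadd := wt_add_modEq s (s + t)
  rw [← add_assoc, ZModModule.add_self, zero_add] at hadd
  have hdot := hC.dotProduct_eq_zero_iff hs hx
  by_cases hx₀ : s + t ∈ evenSub C
  · rw [hdot.2 hx₀, ZMod.val_zero] at hadd
    have := hx₀.2
    rw [Nat.ModEq] at hadd ⊢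
    lia
  · have dot_eq_one : s ⬝ᵥ (s + t) = 1 := Fin.eq_one_of_ne_zero _ fun h => hx₀ (hdot.1 h)
    have hxmod := hC.isSelfOrthogonal.wt_modEq_two hx hx₀
    rw [dot_eq_one, ZMod.val_one] at hadd
    rw [Nat.ModEq] at hadd hxmod ⊢
    lia

theorem isSelfDual_neighborCode (hC : IsSelfDual C) (ht : t ∈ shadow C) (ht2 : Even (wt t)) :
    IsSelfDual (neighborCode C t) := by
  ext x
  have hC' := hC.isSelfOrthogonal
  rw [SetLike.mem_coe, mem_dualSet_neighborCode_iff hC', mem_neighborCode_iff hC']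
  by_cases hx : x ∈ C
  · have hxt : x + t ∉ evenSub C := fun h => ht.2 ((C.add_mem_iff_right hx).1 h.1)
    rw [dotProduct_comm, hC.dotProduct_eq_zero_iff ht hx]
    have := mem_dualSet_evenSub_of_mem hC' hx
    tauto
  · have hx₀ : x ∉ evenSub C := fun h => hx h.1
    have mem_of_dual : x ∈ dualSet (evenSub C) → x + t ∈ C := fun h =>
      hC.add_mem_of_mem_shadow ⟨h, hx⟩ ht
    have dual_of_mem : x + t ∈ evenSub C → x ∈ dualSet (evenSub C) := fun h =>
      (mem_shadow_of_add_mem hC' ht h.1).1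
    have dot_eq : t ⬝ᵥ (x + t) = x ⬝ᵥ t := by
      rw [dotProduct_add, even_wt_iff.1 ht2, add_zero, dotProduct_comm]
    have := fun h => hC.dotProduct_eq_zero_iff ht (mem_of_dual h)
    rw [dot_eq] at this
    tauto

theorem evenSub_neighborCode (hC : IsSelfDual C) (ht : t ∈ shadow C) (ht4 : ¬ 4 ∣ wt t) :
    evenSub (neighborCode C t) = evenSub C := by
  ext x
  refine ⟨fun ⟨hx, hx4⟩ => ?_, fun hx => ⟨evenSub_subset_neighborCode hx, hx.2⟩⟩
  refine ((mem_neighborCode_iff hC.isSelfOrthogonal).1 hx).resolve_right fun hxt => ht4 ?_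
  have hxS := mem_shadow_of_add_mem hC.isSelfOrthogonal ht hxt.1
  exact ((hC.wt_modEq_of_mem_shadow hxS ht).dvd_iff dvd_rfl).2 hx4

theorem exists_add_eq_of_add_notMem_evenSub (hC : IsSelfDual C) (hs : s ∈ shadow C)
    (ht : t ∈ shadow C) (hst : s + t ∉ evenSub C) (hx : x ∈ shadow C) (hxt : x + t ∉ evenSub C) :
    ∃ c ∈ evenSub C, s + c = x := by
  refine ⟨s + t + (t + x), ?_, ?_⟩
  · rw [hC.isSelfOrthogonal.add_mem_evenSub_iff (hC.add_mem_of_mem_shadow hs ht)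
      (hC.add_mem_of_mem_shadow ht hx), add_comm t x]
    exact iff_of_false hst hxt
  · rw [ZModModule.add_add_add_cancel, ← add_assoc, ZModModule.add_self, zero_add]

theorem isSinglyEvenSelfDual_neighborCode (hC : IsSelfDual C) (ht : t ∈ shadow C)
    (htmod : wt t ≡ 2 [MOD 4]) : IsSinglyEvenSelfDual (neighborCode C t) :=
  ⟨hC.isSelfDual_neighborCode ht (even_of_modEq_two htmod),
    t, self_mem_neighborCode, not_four_dvd_of_modEq_two htmod⟩

/-- In the notation `C = C₀ ∪ C₂`, `S = C₁ ∪ C₃` with `t ∈ C₃`, the shadow of `C₀ ∪ C₃` is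
`C₂ ∪ C₁`. -/
theorem mem_shadow_neighborCode_iff (hC : IsSelfDual C) (ht : t ∈ shadow C) (ht4 : ¬ 4 ∣ wt t) :
    x ∈ shadow (neighborCode C t) ↔
      x ∈ (C : Set _) \ evenSub C ∨ x ∈ shadow C ∧ x + t ∉ evenSub C := by
  have hx_dual : x ∈ C → x ∈ dualSet (evenSub C) := mem_dualSet_evenSub_of_mem hC.isSelfOrthogonal
  have hxt : x ∈ C → x + t ∉ evenSub C := fun hx h => ht.2 ((C.add_mem_iff_right hx).1 h.1)
  have hx₀ : x ∈ evenSub C → x ∈ C := fun h => h.1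
  simp only [mem_shadow_iff, hC.evenSub_neighborCode ht ht4, Set.mem_sdiff, SetLike.mem_coe,
    mem_neighborCode_iff hC.isSelfOrthogonal]
  tauto

theorem add_four_le_wt_of_mem_shadow_neighborCode {k : ℕ} (hC : IsSelfDual C) (ht : t ∈ shadow C)
    (htmod : wt t ≡ 2 [MOD 4]) (hk : k ≡ 2 [MOD 4]) (hCmin : ∀ y ∈ C, y ≠ 0 → k < wt y)
    (hSmin : ∀ y ∈ shadow C, y + t ∉ evenSub C → k < wt y)
    (hx : x ∈ shadow (neighborCode C t)) : k + 4 ≤ wt x := by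
  have add_four_le (hmod : wt x ≡ 2 [MOD 4]) (hlt : k < wt x) : k + 4 ≤ wt x :=
    Nat.ModEq.add_le_of_lt (hk.trans hmod.symm) hlt
  rcases (hC.mem_shadow_neighborCode_iff ht (not_four_dvd_of_modEq_two htmod)).1 hx with
    ⟨hxC, hx₀⟩ | ⟨hxS, hxt⟩
  · have x_ne_zero : x ≠ 0 := fun h => hx₀ (h ▸ zero_mem_evenSub)
    exact add_four_le (hC.isSelfOrthogonal.wt_modEq_two hxC hx₀) (hCmin x hxC x_ne_zero)
  · exact add_four_le ((hC.wt_modEq_of_mem_shadow ht hxS).trans htmod) (hSmin x hxS hxt)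

end IsSelfDual

end Code

/-! ### Orthogonal arrays -/

section OrthogonalArray

variable {n k : ℕ}

/-- The nontrivial character `a ↦ (-1) ^ a` of the additive group of `𝔽₂`. -/
def signChar : AddChar (ZMod 2) ℤ :=
  AddChar.zmodChar 2 (by norm_num : (-1 : ℤ) ^ 2 = 1)

theorem signChar_sum {ι : Type*} (s : Finset ι) (f : ι → ZMod 2) :
    signChar (∑ i ∈ s, f i) = ∏ i ∈ s, signChar (f i) :=
  map_prod signChar.toMonoidHom (fun i => Multiplicative.ofAdd (f i)) s

theorem signChar_eq (a : ZMod 2) : signChar a = 1 - 2 * (a.val : ℤ) := by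
  revert a
  decide

theorem sum_signChar (v : Fin n → ZMod 2) : ∑ i, signChar (v i) = (n : ℤ) - 2 * wt v := by
  simp [signChar_eq, wt_eq_sum_val, mul_sum]

theorem sub_two_mul_wt_pow (v : Fin n → ZMod 2) (k : ℕ) :
    ((n : ℤ) - 2 * wt v) ^ k =
      ∑ p : Fin k → Fin n, signChar ((∑ j, Pi.single (p j) 1) ⬝ᵥ v) := by
  simp only [← sum_signChar, Fintype.sum_pow, sum_dotProduct, single_one_dotProduct,
    signChar_sum]

/-- `T` is an orthogonal array of strength `k`, expressed by Delsarte's criterion: its sums against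
the nontrivial characters of weight at most `k` vanish. -/
def IsOrthogonalArray (T : Finset (Fin n → ZMod 2)) (k : ℕ) : Prop :=
  ∀ u : Fin n → ZMod 2, u ≠ 0 → wt u ≤ k → ∑ v ∈ T, signChar (u ⬝ᵥ v) = 0

theorem sum_signChar_dotProduct_eq_zero {T : Finset (Fin n → ZMod 2)} {u d : Fin n → ZMod 2}
    (hud : u ⬝ᵥ d ≠ 0) (hT : ∀ v ∈ T, v + d ∈ T) : ∑ v ∈ T, signChar (u ⬝ᵥ v) = 0 := by
  have signChar_cancel : ∀ a b : ZMod 2, b ≠ 0 → signChar a + signChar (a + b) = 0 := by decide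
  refine sum_involution (fun v _ => v + d) (fun v _ => ?_) (fun v _ _ hvd => hud ?_) hT
    fun v _ => ?_
  · rw [dotProduct_add]
    exact signChar_cancel _ _ hud
  · rw [add_eq_left.1 hvd, dotProduct_zero]
  · rw [add_assoc, ZModModule.add_self, add_zero]

theorem isOrthogonalArray_of_add_mem {T : Finset (Fin n → ZMod 2)} {D : Set (Fin n → ZMod 2)}
    (hD : ∀ u ∈ dualSet D, u ≠ 0 → k < wt u) (hT : ∀ v ∈ T, ∀ d ∈ D, v + d ∈ T) :
    IsOrthogonalArray T k := by
  intro u hu huk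
  have hu_dual : u ∉ dualSet D := fun h => (hD u h hu).not_ge huk
  simp only [mem_dualSet, not_forall] at hu_dual
  obtain ⟨d, hd, hud⟩ := hu_dual
  exact sum_signChar_dotProduct_eq_zero hud fun v hv => hT v hv d hd

theorem isOrthogonalArray_univ (n k : ℕ) :
    IsOrthogonalArray (univ : Finset (Fin n → ZMod 2)) k := by
  refine isOrthogonalArray_of_add_mem (D := Set.univ) (fun u hu hu₀ => absurd ?_ hu₀) (by simp)
  exact dotProduct_eq_zero u fun w => hu w (Set.mem_univ w)

namespace IsOrthogonalArray

theorem sum_pow {T : Finset (Fin n → ZMod 2)} (hT : IsOrthogonalArray T k) :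
    ∑ v ∈ T, ((n : ℤ) - 2 * wt v) ^ k =
      #T * #{p : Fin k → Fin n | (∑ j, Pi.single (p j) 1 : Fin n → ZMod 2) = 0} := by
  have sum_char (p : Fin k → Fin n) :
      ∑ v ∈ T, signChar ((∑ j, Pi.single (p j) 1) ⬝ᵥ v) =
        if (∑ j, Pi.single (p j) 1 : Fin n → ZMod 2) = 0 then (#T : ℤ) else 0 := by
    split_ifs with hp
    · simp [hp]
    · exact hT _ hp (wt_sum_single_one_le p)
  simp only [sub_two_mul_wt_pow]
  rw [sum_comm, sum_congr rfl fun p _ => sum_char p, ← sum_filter, sum_const, nsmul_eq_mul,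
    mul_comm]

theorem mono {T : Finset (Fin n → ZMod 2)} {j : ℕ} (hT : IsOrthogonalArray T k) (hj : j ≤ k) :
    IsOrthogonalArray T j :=
  fun u hu huj => hT u hu (huj.trans hj)

theorem card_mul_sum_eval {T : Finset (Fin n → ZMod 2)} {p : Polynomial ℤ}
    (hT : IsOrthogonalArray T p.natDegree) :
    2 ^ n * ∑ v ∈ T, p.eval ((n : ℤ) - 2 * wt v) =
      #T * ∑ v : Fin n → ZMod 2, p.eval ((n : ℤ) - 2 * wt v) := by
  simp only [Polynomial.eval_eq_sum_range]
  rw [sum_comm, sum_comm (s := univ), mul_sum, mul_sum]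
  refine sum_congr rfl fun j hj => ?_
  have hj' : j ≤ p.natDegree := Nat.lt_succ_iff.1 (mem_range.1 hj)
  rw [← mul_sum, ← mul_sum, (hT.mono hj').sum_pow, (isOrthogonalArray_univ n j).sum_pow]
  simp only [card_univ, Fintype.card_pi_const, ZMod.card, Nat.cast_pow, Nat.cast_ofNat]
  ring

end IsOrthogonalArray

theorem sum_univ_wt (f : ℕ → ℤ) :
    ∑ v : Fin n → ZMod 2, f (wt v) = ∑ m ∈ range (n + 1), n.choose m * f m := by
  have sum_powerset := sum_powerset_apply_card f (x := (univ : Finset (Fin n)))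
  simp only [card_univ, Fintype.card_fin, nsmul_eq_mul] at sum_powerset
  rw [← sum_powerset]
  have zmod_two_eq : ∀ a : ZMod 2, (if a ≠ 0 then 1 else 0) = a := by decide
  refine sum_bij' (fun v _ => ({i | v i ≠ 0} : Finset (Fin n)))
    (fun s _ i => if i ∈ s then 1 else 0) (by simp) (by simp) ?_ ?_ fun v _ => rfl
  · intro v _
    funext i
    simpa using zmod_two_eq (v i)
  · intro s _
    ext i
    simp

theorem sum_choose_mul_eval_eq_zero {S D : Set (Fin n → ZMod 2)} {p : Polynomial ℤ}
    (hS : S.Nonempty) (hSD : ∀ v ∈ S, ∀ d ∈ D, v + d ∈ S)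
    (hD : ∀ u ∈ dualSet D, u ≠ 0 → p.natDegree < wt u)
    (hp : ∀ v ∈ S, p.eval ((n : ℤ) - 2 * wt v) = 0) :
    ∑ m ∈ range (n + 1), n.choose m * p.eval ((n : ℤ) - 2 * m) = 0 := by
  let T : Finset (Fin n → ZMod 2) := S.toFinite.toFinset
  have mem_T : ∀ v, v ∈ T ↔ v ∈ S := fun _ => S.toFinite.mem_toFinset
  have hT : IsOrthogonalArray T p.natDegree :=
    isOrthogonalArray_of_add_mem hD (by simpa only [mem_T] using hSD)
  have sum_T : ∑ v ∈ T, p.eval ((n : ℤ) - 2 * wt v) = 0 :=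
    sum_eq_zero fun v hv => hp v ((mem_T v).1 hv)
  have card_T : (#T : ℤ) ≠ 0 := by
    simpa [T, Set.nonempty_iff_ne_empty] using hS
  have average := hT.card_mul_sum_eval
  rw [sum_T, mul_zero, sum_univ_wt fun m => p.eval ((n : ℤ) - 2 * m)] at average
  exact (mul_eq_zero.1 average.symm).resolve_left card_T

end OrthogonalArray

section LengthSixty

open Polynomial

/-- The polynomial whose roots are `60 - 2 * w` for `w = 18, 22, …, 42`. The root `0` is doubled
because an odd polynomial has average zero and could give no contradiction. -/
noncomputable def midWeightPoly : ℤ[X] :=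
  X ^ 2 * (X ^ 2 - 8 ^ 2) * (X ^ 2 - 16 ^ 2) * (X ^ 2 - 24 ^ 2)

theorem natDegree_midWeightPoly_le : midWeightPoly.natDegree ≤ 8 := by
  unfold midWeightPoly
  compute_degree

theorem eval_midWeightPoly (a : ℤ) :
    midWeightPoly.eval a = a ^ 2 * (a ^ 2 - 8 ^ 2) * (a ^ 2 - 16 ^ 2) * (a ^ 2 - 24 ^ 2) := by
  simp [midWeightPoly]

theorem sum_choose_mul_eval_midWeightPoly_ne_zero :
    ∑ m ∈ range 61, Nat.choose 60 m * midWeightPoly.eval (60 - 2 * (m : ℤ)) ≠ 0 := by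
  simp only [eval_midWeightPoly]
  decide +kernel

theorem eval_midWeightPoly_eq_zero {w : ℕ} (hw : w ≡ 2 [MOD 4]) (hlow : 14 < w) (hhigh : w < 46) :
    midWeightPoly.eval (60 - 2 * (w : ℤ)) = 0 := by
  obtain rfl | rfl | rfl | rfl | rfl | rfl | rfl :
      w = 18 ∨ w = 22 ∨ w = 26 ∨ w = 30 ∨ w = 34 ∨ w = 38 ∨ w = 42 := by
    rw [Nat.ModEq] at hw
    lia
  all_goals norm_num [eval_midWeightPoly]

theorem exists_mem_shadow_wt_le_fourteen {D : Submodule (ZMod 2) (Fin 60 → ZMod 2)}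
    {t : Fin 60 → ZMod 2} (hD : IsSelfDual D) (hwt : ∀ x ∈ D, x ≠ 0 → 8 < wt x)
    (ht : t ∈ shadow D) (htmod : wt t ≡ 2 [MOD 4]) : ∃ v ∈ shadow D, wt v ≤ 14 := by
  by_contra! hlow
  refine sum_choose_mul_eval_midWeightPoly_ne_zero (sum_choose_mul_eval_eq_zero (D := D) ⟨t, ht⟩
    (fun v hv d hd => add_mem_shadow hD.isSelfOrthogonal hv hd) (fun u hu hu₀ => ?_)
    fun v hv => ?_)
  · exact natDegree_midWeightPoly_le.trans_lt (hwt u (hD.mem_iff.2 hu) hu₀)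
  · have hcompl := hlow _ (add_mem_shadow hD.isSelfOrthogonal hv hD.one_mem)
    have := wt_add_one_add_wt v
    exact eval_midWeightPoly_eq_zero ((hD.wt_modEq_of_mem_shadow ht hv).trans htmod) (hlow v hv)
      (by lia)

theorem minWtSet_shadow_eq_fourteen {D : Submodule (ZMod 2) (Fin 60 → ZMod 2)}
    {t : Fin 60 → ZMod 2} (hD : IsSelfDual D) (hwt : ∀ x ∈ D, x ≠ 0 → 8 < wt x)
    (ht : t ∈ shadow D) (htmod : wt t ≡ 2 [MOD 4]) (hlow : ∀ v ∈ shadow D, 14 ≤ wt v) :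
    minWtSet (shadow D) = 14 := by
  obtain ⟨v, hv, hv14⟩ := exists_mem_shadow_wt_le_fourteen hD hwt ht htmod
  exact (minWtSet_eq_iff (by norm_num)).2
    ⟨⟨v, hv, hv14.antisymm (hlow v hv)⟩, fun x hx _ => hlow x hx⟩

end LengthSixty

/-- If `C` is an s-extremal singly even self-dual `[60, 30, 12]` code (shadow minimum
weight 10) whose shadow coset `C₁ = t₁ + C₀` contains no vector of weight 10, then the
neighbor `N₃(C) = C₀ ∪ C₃ = C₀ ∪ (t₃ + C₀)` (for `t₃` a shadow vector in the other coset)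
is an s-extremal singly even self-dual `[60, 30, 10]` code: it is singly even self-dual
with minimum weight 10 and its shadow has minimum weight 14. -/
theorem sExtremal_60_neighbor (C : Submodule (ZMod 2) (Fin 60 → ZMod 2))
    (hse : IsSinglyEvenSelfDual C)
    (hdim : Module.finrank (ZMod 2) C = 30)
    (hd : minWt C = 12)
    (hshadow : minWtSet (shadow C) = 10)
    (t₁ t₃ : Fin 60 → ZMod 2)
    (ht₁ : t₁ ∈ shadow C) (ht₃ : t₃ ∈ shadow C)
    (hdiff : t₁ + t₃ ∉ evenSub C)
    (hC₁ : ∀ c ∈ evenSub C, wt (t₁ + c) ≠ 10) :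
    IsSinglyEvenSelfDual (neighborCode C t₃) ∧
    Module.finrank (ZMod 2) (neighborCode C t₃) = 30 ∧
    minWt (neighborCode C t₃) = 10 ∧
    minWtSet (shadow (neighborCode C t₃)) = 14 := by
  obtain ⟨hC, z, hzC, hz4⟩ := hse
  have hC' := hC.isSelfOrthogonal
  obtain ⟨-, hCmin⟩ := (minWtSet_eq_iff (by norm_num)).1 hd
  obtain ⟨⟨s, hs, hs10⟩, hSmin⟩ := (minWtSet_eq_iff (by norm_num)).1 hshadow
  have C_gt : ∀ x ∈ C, x ≠ 0 → 10 < wt x := fun x hx hx₀ => by have := hCmin x hx hx₀; lia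
  have S_ge : ∀ v ∈ shadow C, 10 ≤ wt v := fun v hv => hSmin v hv (ne_zero_of_mem_shadow hv)
  have C₁_gt : ∀ v ∈ shadow C, v + t₃ ∉ evenSub C → 10 < wt v := fun v hv hvt₃ => by
    obtain ⟨c, hc, rfl⟩ := hC.exists_add_eq_of_add_notMem_evenSub ht₁ ht₃ hdiff hv hvt₃
    exact (S_ge _ hv).lt_of_ne' (hC₁ c hc)
  have S_mod : ∀ v ∈ shadow C, wt v ≡ 2 [MOD 4] := fun v hv =>
    (hC.wt_modEq_of_mem_shadow hs hv).trans (by rw [hs10]; rfl)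
  have hN := hC.isSinglyEvenSelfDual_neighborCode ht₃ (S_mod t₃ ht₃)
  have N_ge : ∀ x ∈ neighborCode C t₃, x ≠ 0 → 10 ≤ wt x := fun x =>
    le_wt_of_mem_neighborCode hC' ht₃ (fun y hy hy₀ => (C_gt y hy hy₀).le) S_ge
  have ht₁N : t₁ ∈ shadow (neighborCode C t₃) := (hC.mem_shadow_neighborCode_iff ht₃
    (not_four_dvd_of_modEq_two (S_mod t₃ ht₃))).2 (.inr ⟨ht₁, hdiff⟩)
  have hsN : s ∈ neighborCode C t₃ := (mem_neighborCode_iff hC').2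
    (.inr (by_contra fun h => (C₁_gt s hs h).ne' hs10))
  refine ⟨hN, ?_, (minWtSet_eq_iff (by norm_num)).2 ⟨⟨s, hsN, hs10⟩, N_ge⟩, ?_⟩
  · rw [finrank_neighborCode_eq_finrank hC' hzC (fun h => hz4 h.2)
      (notMem_evenSub_of_mem_shadow ht₃), hdim]
  · exact minWtSet_shadow_eq_fourteen hN.1 (fun x hx hx₀ => by have := N_ge x hx hx₀; lia) ht₁N
      (S_mod t₁ ht₁) fun v => hC.add_four_le_wt_of_mem_shadow_neighborCode ht₃ (S_mod t₃ ht₃)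
        rfl C_gt C₁_gt
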